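/- arXiv:2103.10314 — 2 statements merged into one kernel-verified Lean document; each statement's English description precedes it below -/
import Mathlib

section
/- Let h(ξ,t) = (ξ/√t)·e^{−|ξ|²t} for ξ ∈ ℝᴺ, t > 0. For every multi-index α with |α| = k there exists C_k > 0 such that |ξ|^k ∫₀^∞ |D^α_ξ h(ξ,t)| dt ≤ C_k for all ξ ≠ 0. -/
open MeasureTheory Set
open scoped ENNReal

theorem aux_poly_exp (m : ℕ) (r : ℝ) (hr : 0 ≤ r) :
    (1 + r) ^ m * Real.exp (-r ^ 2) ≤ (m.factorial : ℝ) * Real.exp 2 := by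
  have h1 : (1 + r) ^ m / (m.factorial : ℝ) ≤ Real.exp (1 + r) :=
    Real.pow_div_factorial_le_exp (1 + r) (by positivity) m
  have hm : (0 : ℝ) < m.factorial := by positivity
  rw [div_le_iff₀ hm] at h1
  calc (1 + r) ^ m * Real.exp (-r ^ 2)
      ≤ (Real.exp (1 + r) * m.factorial) * Real.exp (-r ^ 2) := by gcongr
    _ = (m.factorial : ℝ) * Real.exp (1 + r + -r ^ 2) := by rw [Real.exp_add (1 + r)]; ring
    _ ≤ (m.factorial : ℝ) * Real.exp 2 := by
        gcongr
        nlinarith [sq_nonneg (r - 1)]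

theorem aux_gauss_decay {H : Type*} [NormedAddCommGroup H] [InnerProductSpace ℝ H] (k n : ℕ) :
    ∃ C : ℝ, ∀ x : H,
      ‖x‖ ^ k * ‖iteratedFDeriv ℝ n (fun x : H => Real.exp (-‖x‖ ^ 2)) x‖ ≤ C := by
  have htg : Function.HasTemperateGrowth (fun x : H => -‖x‖ ^ 2) :=
    (Function.hasTemperateGrowth_norm_sq (H := H)).neg
  obtain ⟨m, C, hC, hb⟩ := htg.norm_iteratedFDeriv_le_uniform n
  refine ⟨n.factorial * (C + 1) ^ n * (((k + m * n).factorial : ℝ) * Real.exp 2), fun x => ?_⟩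
  have hD1 : 1 ≤ (C + 1) * (1 + ‖x‖) ^ m := by
    have : 1 ≤ (1 + ‖x‖) ^ m := one_le_pow₀ (by linarith [norm_nonneg x])
    nlinarith
  have key : ‖iteratedFDeriv ℝ n (Real.exp ∘ (fun x : H => -‖x‖ ^ 2)) x‖ ≤
      n.factorial * Real.exp (-‖x‖ ^ 2) * ((C + 1) * (1 + ‖x‖) ^ m) ^ n := by
    refine norm_iteratedFDeriv_comp_le (N := (n : ℕ∞)) Real.contDiff_exp
      (htg.1.of_le (mod_cast le_top)) le_rfl x ?_ ?_
    · intro i hi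
      rw [norm_iteratedFDeriv_eq_norm_iteratedDeriv, iteratedDeriv_eq_iterate, Real.iter_deriv_exp,
        Real.norm_of_nonneg (Real.exp_pos _).le]
    · intro i h1 hi
      calc _ ≤ C * (1 + ‖x‖) ^ m := hb i hi x
        _ ≤ (C + 1) * (1 + ‖x‖) ^ m := by gcongr; linarith
        _ ≤ _ := le_self_pow₀ hD1 (by omega)
  calc ‖x‖ ^ k * ‖iteratedFDeriv ℝ n (fun x : H => Real.exp (-‖x‖ ^ 2)) x‖
      ≤ (1 + ‖x‖) ^ k *
        (n.factorial * Real.exp (-‖x‖ ^ 2) * ((C + 1) * (1 + ‖x‖) ^ m) ^ n) := by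
        gcongr
        · linarith
        · exact key
    _ = n.factorial * (C + 1) ^ n * ((1 + ‖x‖) ^ (k + m * n) * Real.exp (-‖x‖ ^ 2)) := by
        rw [mul_pow, ← pow_mul, pow_add]; ring
    _ ≤ _ := by
        exact mul_le_mul_of_nonneg_left (aux_poly_exp _ _ (norm_nonneg x)) (by positivity)

/-- The Gaussian as a Schwartz function. -/
noncomputable def auxGauss (H : Type*) [NormedAddCommGroup H] [InnerProductSpace ℝ H] :
    SchwartzMap H ℝ where
  toFun := fun x => Real.exp (-‖x‖ ^ 2)
  smooth' := Real.contDiff_exp.comp (contDiff_norm_sq ℝ).neg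
  decay' := aux_gauss_decay

/-- `η e^{-|η|²}` as a Schwartz function. -/
noncomputable def auxG (H : Type*) [NormedAddCommGroup H] [InnerProductSpace ℝ H] :
    SchwartzMap H H :=
  SchwartzMap.bilinLeftCLM (ContinuousLinearMap.lsmul ℝ ℝ (E := H))
    (Function.HasTemperateGrowth.id' (E := H)) (auxGauss H)

theorem auxG_apply {H : Type*} [NormedAddCommGroup H] [InnerProductSpace ℝ H] (x : H) :
    auxG H x = Real.exp (-‖x‖ ^ 2) • x := rfl

theorem auxG_bound (H : Type*) [NormedAddCommGroup H] [InnerProductSpace ℝ H] (k : ℕ) :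
    ∃ C : ℝ, 0 < C ∧ ∀ x : H,
      ‖x‖ ^ k * ‖iteratedFDeriv ℝ k (auxG H) x‖ * (1 + ‖x‖ ^ 2) ≤ C * ‖x‖ := by
  rcases k with _ | k
  · refine ⟨2 * Real.exp 2, by positivity, fun x => ?_⟩
    have h := aux_poly_exp 2 ‖x‖ (norm_nonneg x)
    simp only [Nat.factorial] at h
    rw [norm_iteratedFDeriv_zero, auxG_apply, norm_smul, Real.norm_of_nonneg (Real.exp_pos _).le]
    have hx := norm_nonneg x
    have he := Real.exp_pos (-‖x‖ ^ 2)
    have h2 : (1 + ‖x‖ ^ 2) * Real.exp (-‖x‖ ^ 2) ≤ 2 * Real.exp 2 := by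
      refine le_trans ?_ (by simpa using h)
      gcongr
      nlinarith
    calc _ = ((1 + ‖x‖ ^ 2) * Real.exp (-‖x‖ ^ 2)) * ‖x‖ := by ring
      _ ≤ _ := by gcongr
  · obtain ⟨C1, h1, hb1⟩ := (auxG H).decay k (k + 1)
    obtain ⟨C2, h2, hb2⟩ := (auxG H).decay (k + 2) (k + 1)
    refine ⟨C1 + C2, by positivity, fun x => ?_⟩
    have hx := norm_nonneg x
    calc _ = (‖x‖ ^ k * ‖iteratedFDeriv ℝ (k + 1) (auxG H) x‖
            + ‖x‖ ^ (k + 2) * ‖iteratedFDeriv ℝ (k + 1) (auxG H) x‖) * ‖x‖ := by ring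
      _ ≤ _ := by
        gcongr
        · exact hb1 x
        · exact hb2 x

theorem aux_integral (a : ℝ) (ha : 0 < a) :
    ∫⁻ t in Set.Ioi (0 : ℝ), ENNReal.ofReal (a / (Real.sqrt t * (1 + (a * Real.sqrt t) ^ 2)))
      = ENNReal.ofReal Real.pi := by
  have hc : Continuous (fun t : ℝ => 2 * Real.arctan (a * Real.sqrt t)) := by fun_prop
  have hd : ∀ t ∈ Set.Ioi (0 : ℝ), HasDerivAt (fun t : ℝ => 2 * Real.arctan (a * Real.sqrt t))
      (a / (Real.sqrt t * (1 + (a * Real.sqrt t) ^ 2))) t := by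
    intro t ht
    have ht' : 0 < t := ht
    have := (((Real.hasDerivAt_sqrt ht'.ne').const_mul a).arctan).const_mul 2
    refine this.congr_deriv ?_
    have : 0 < Real.sqrt t := Real.sqrt_pos.2 ht'
    field_simp
  have hp : ∀ t ∈ Set.Ioi (0 : ℝ), 0 ≤ a / (Real.sqrt t * (1 + (a * Real.sqrt t) ^ 2)) := by
    intro t _
    positivity
  have hl : Filter.Tendsto (fun t : ℝ => 2 * Real.arctan (a * Real.sqrt t)) Filter.atTop
      (nhds Real.pi) := by
    have h1 : Filter.Tendsto (fun t : ℝ => a * Real.sqrt t) Filter.atTop Filter.atTop :=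
      Real.tendsto_sqrt_atTop.const_mul_atTop ha
    have h2 := ((Real.tendsto_arctan_atTop.mono_right nhdsWithin_le_nhds).comp h1).const_mul 2
    rw [mul_div_cancel₀ Real.pi (two_ne_zero' ℝ)] at h2
    exact h2
  have hi := integrableOn_Ioi_deriv_of_nonneg hc.continuousWithinAt hd hp hl
  have he := integral_Ioi_of_hasDerivAt_of_nonneg hc.continuousWithinAt hd hp hl
  rw [← ofReal_integral_eq_lintegral_ofReal hi
    ((ae_restrict_iff' measurableSet_Ioi).2 (Filter.Eventually.of_forall hp)), he]
  simp

/-- Let `h(ξ,t) = (ξ/√t) e^{-|ξ|² t}` for `ξ ∈ ℝᴺ`, `t > 0`. For every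
derivative order `k` there is `C_k > 0` such that
`|ξ|^k ∫₀^∞ ‖D^k_ξ h(ξ,t)‖ dt ≤ C_k` for all `ξ ≠ 0`. -/
theorem mikhlin_symbol_estimate (N : ℕ) (k : ℕ) :
    ∃ C : ℝ, 0 < C ∧ ∀ ξ : EuclideanSpace ℝ (Fin N), ξ ≠ 0 →
      ENNReal.ofReal (‖ξ‖ ^ k) *
        ∫⁻ t in Set.Ioi (0:ℝ),
          (‖iteratedFDeriv ℝ k
            (fun ζ : EuclideanSpace ℝ (Fin N) =>
              ((Real.sqrt t)⁻¹ * Real.exp (-‖ζ‖ ^ 2 * t)) • ζ) ξ‖₊ : ℝ≥0∞)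
        ≤ ENNReal.ofReal C := by
  obtain ⟨C, hC, hb⟩ := auxG_bound (EuclideanSpace ℝ (Fin N)) k
  refine ⟨C * Real.pi, by positivity, fun ξ hξ => ?_⟩
  have ha : 0 < ‖ξ‖ := norm_pos_iff.2 hξ
  rw [ENNReal.ofReal_mul hC.le, ← aux_integral ‖ξ‖ ha,
    ← lintegral_const_mul' _ _ ENNReal.ofReal_ne_top,
    ← lintegral_const_mul' _ _ ENNReal.ofReal_ne_top]
  refine setLIntegral_mono' measurableSet_Ioi fun t ht => ?_
  have ht' : 0 < t := ht
  have hs : 0 < Real.sqrt t := Real.sqrt_pos.2 ht'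
  have hss : Real.sqrt t ^ 2 = t := Real.sq_sqrt ht'.le
  have hfun : (fun ζ : EuclideanSpace ℝ (Fin N) =>
      ((Real.sqrt t)⁻¹ * Real.exp (-‖ζ‖ ^ 2 * t)) • ζ) =
      fun ζ => (t⁻¹ : ℝ) • (fun z => auxG (EuclideanSpace ℝ (Fin N)) (Real.sqrt t • z)) ζ := by
    funext ζ
    simp only [auxG_apply, smul_smul, norm_smul, Real.norm_of_nonneg hs.le]
    congr 1
    rw [mul_pow, hss, show -(t * ‖ζ‖ ^ 2) = -‖ζ‖ ^ 2 * t by ring]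
    have : (Real.sqrt t)⁻¹ = t⁻¹ * Real.sqrt t := by
      rw [← hss]; simp only [Real.sqrt_sq hs.le]; field_simp
    rw [this]; ring
  have hsm : ContDiff ℝ k (auxG (EuclideanSpace ℝ (Fin N))) := (auxG _).smooth' |>.of_le
    (mod_cast le_top)
  have hnorm : ‖iteratedFDeriv ℝ k (fun ζ : EuclideanSpace ℝ (Fin N) =>
      ((Real.sqrt t)⁻¹ * Real.exp (-‖ζ‖ ^ 2 * t)) • ζ) ξ‖ =
      t⁻¹ * (Real.sqrt t ^ k *
        ‖iteratedFDeriv ℝ k (auxG (EuclideanSpace ℝ (Fin N))) (Real.sqrt t • ξ)‖) := by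
    rw [hfun, iteratedFDeriv_const_smul_apply'
      (f := fun z => auxG (EuclideanSpace ℝ (Fin N)) (Real.sqrt t • z)) (hsm.comp (contDiff_const_smul (Real.sqrt t))).contDiffAt,
      iteratedFDeriv_comp_const_smul _ hsm, norm_smul, norm_smul,
      Real.norm_of_nonneg (by positivity), Real.norm_of_nonneg (by positivity)]
  have hb' := hb (Real.sqrt t • ξ)
  rw [norm_smul, Real.norm_of_nonneg hs.le] at hb'
  rw [← enorm_eq_nnnorm, ← ofReal_norm, hnorm, ← ENNReal.ofReal_mul (by positivity),
    ← ENNReal.ofReal_mul hC.le]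
  refine ENNReal.ofReal_le_ofReal ?_
  set X := ‖iteratedFDeriv ℝ k (auxG (EuclideanSpace ℝ (Fin N))) (Real.sqrt t • ξ)‖
  rw [← mul_div_assoc, le_div_iff₀ (by positivity)]
  calc ‖ξ‖ ^ k * (t⁻¹ * (Real.sqrt t ^ k * X)) * (Real.sqrt t * (1 + (‖ξ‖ * Real.sqrt t) ^ 2))
      = t⁻¹ * Real.sqrt t * ((Real.sqrt t * ‖ξ‖) ^ k * X * (1 + (Real.sqrt t * ‖ξ‖) ^ 2)) := by
        rw [mul_pow (Real.sqrt t) _ k]; ring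
    _ ≤ t⁻¹ * Real.sqrt t * (C * (Real.sqrt t * ‖ξ‖)) := by gcongr
    _ = t⁻¹ * (Real.sqrt t ^ 2) * (C * ‖ξ‖) := by ring
    _ = C * ‖ξ‖ := by rw [hss, inv_mul_cancel₀ ht'.ne', one_mul]
end

section
/- Let ν ≥ −1/2 and α, z ∈ ℂ with Re α > 0. Then ∫₀^∞ e^{−αρ²} ρ^{1+ν} I_ν(zρ) dρ = z^ν/(2α)^{ν+1} · e^{z²/(4α)}, where I_ν is the modified Bessel function of the first kind. -/
open MeasureTheory Set
open scoped Real

/-- The modified Bessel function of the first kind `I_ν`, defined by its power series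
(with principal branch of the power `(w/2)^ν`). -/
noncomputable def besselI (ν : ℝ) (w : ℂ) : ℂ :=
  (w / 2) ^ (ν : ℂ) *
    ∑' n : ℕ, (w / 2) ^ (2 * n) / ((n.factorial : ℂ) * Complex.Gamma ((ν : ℂ) + 1 + (n : ℂ)))

lemma aux_cpow_mul_pos (z s : ℂ) {r : ℝ} (hr : 0 < r) :
    (z * (r : ℂ)) ^ s = z ^ s * (r : ℂ) ^ s := by
  rcases eq_or_ne z 0 with rfl | hz
  · rcases eq_or_ne s 0 with rfl | hs
    · simp
    · simp [Complex.zero_cpow hs]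
  · have hr' : (r : ℂ) ≠ 0 := by exact_mod_cast hr.ne'
    rw [Complex.cpow_def_of_ne_zero (mul_ne_zero hz hr'), Complex.cpow_def_of_ne_zero hz,
      Complex.cpow_def_of_ne_zero hr', Complex.log_mul_ofReal r hr z hz, ← Complex.exp_add,
      Complex.ofReal_log hr.le]
    ring_nf

lemma aux_gauss_real (a : ℝ) (ha : 0 < a) (s : ℝ) (hs : 0 < s) :
    ∫ ρ in Ioi (0:ℝ), Complex.exp (-(a : ℂ) * (ρ : ℂ) ^ 2) * ((ρ ^ (2 * s - 1) : ℝ) : ℂ)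
      = Complex.Gamma s / (2 * (a : ℂ) ^ (s : ℂ)) := by
  have h1 := integral_comp_rpow_Ioi_of_pos
    (g := fun t : ℝ => (t : ℂ) ^ ((s : ℂ) - 1) * Complex.exp (-(a * t))) (p := 2) two_pos
  rw [Complex.integral_cpow_mul_exp_neg_mul_Ioi (by simpa using hs) ha] at h1
  have h2 : ∫ ρ in Ioi (0:ℝ), ((2 * ρ ^ ((2:ℝ) - 1)) • 
      ((((ρ ^ (2:ℝ) : ℝ) : ℂ)) ^ ((s : ℂ) - 1) * Complex.exp (-(a * ((ρ ^ (2:ℝ) : ℝ) : ℂ))))) =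
      2 * ∫ ρ in Ioi (0:ℝ), Complex.exp (-(a : ℂ) * (ρ : ℂ) ^ 2) * ((ρ ^ (2 * s - 1) : ℝ) : ℂ) := by
    rw [← integral_const_mul]
    refine setIntegral_congr_fun measurableSet_Ioi fun ρ hρ => ?_
    have hρ : 0 < ρ := hρ
    have e1 : (((ρ ^ (2:ℝ) : ℝ) : ℂ)) ^ ((s : ℂ) - 1) = ((ρ ^ (2 * (s - 1)) : ℝ) : ℂ) := by
      rw [Real.rpow_mul hρ.le, Complex.ofReal_cpow (by positivity : (0:ℝ) ≤ ρ ^ (2:ℝ)) (s - 1), Complex.ofReal_sub,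
        Complex.ofReal_one]
    have e2 : ρ ^ (2 * s - 1) = ρ ^ ((2:ℝ) - 1) * ρ ^ (2 * (s - 1)) := by
      rw [← Real.rpow_add hρ]; ring_nf
    simp only [e1, e2, Complex.real_smul]
    rw [Real.rpow_two]
    push_cast
    ring_nf
  rw [h2, one_div, Complex.inv_cpow_ofReal_nonneg ha.le] at h1
  rw [mul_comm (2 : ℂ), ← div_div, div_eq_mul_inv (Complex.Gamma s)]
  linear_combination h1 / 2

lemma aux_norm (α : ℂ) (s : ℝ) {ρ : ℝ} (hρ : 0 < ρ) :
    ‖Complex.exp (-α * (ρ : ℂ) ^ 2) * ((ρ ^ s : ℝ) : ℂ)‖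
      = ρ ^ s * Real.exp (-α.re * ρ ^ 2) := by
  rw [norm_mul, Complex.norm_exp, Complex.norm_real, Real.norm_of_nonneg (by positivity), mul_comm]
  congr 2
  rw [← Complex.ofReal_pow, Complex.re_mul_ofReal, Complex.neg_re]

lemma aux_integrable (α : ℂ) (hα : 0 < α.re) (s : ℝ) (hs : -1 < s) :
    IntegrableOn (fun ρ : ℝ => Complex.exp (-α * (ρ : ℂ) ^ 2) * ((ρ ^ s : ℝ) : ℂ)) (Ioi 0) := by
  have h := integrableOn_rpow_mul_exp_neg_mul_sq hα hs
  refine Integrable.mono' h ?_ ?_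
  · have : Measurable (fun ρ : ℝ => Complex.exp (-α * (ρ : ℂ) ^ 2) * ((ρ ^ s : ℝ) : ℂ)) := by
      fun_prop
    exact this.aestronglyMeasurable
  · filter_upwards [ae_restrict_mem measurableSet_Ioi] with ρ hρ
    exact (aux_norm α s hρ).le

lemma aux_gauss_diff (s : ℝ) (hs : 0 < s) (a₀ : ℂ) (ha : 0 < a₀.re) :
    DifferentiableAt ℂ (fun a : ℂ => ∫ ρ in Ioi (0:ℝ),
      Complex.exp (-a * (ρ : ℂ) ^ 2) * ((ρ ^ (2 * s - 1) : ℝ) : ℂ)) a₀ := by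
  have hU : {a : ℂ | a₀.re / 2 < a.re} ∈ nhds a₀ :=
    (isOpen_lt continuous_const Complex.continuous_re).mem_nhds (by simp; linarith)
  refine (hasDerivAt_integral_of_dominated_loc_of_deriv_le
    (F' := fun a ρ => -(ρ : ℂ) ^ 2 * (Complex.exp (-a * (ρ : ℂ) ^ 2) *
      ((ρ ^ (2 * s - 1) : ℝ) : ℂ)))
    (bound := fun ρ => ρ ^ (2 * s + 1) * Real.exp (-(a₀.re / 2) * ρ ^ 2))
    hU ?_ ?_ ?_ ?_ ?_ ?_).2.differentiableAt
  · refine Filter.Eventually.of_forall fun a => Measurable.aestronglyMeasurable ?_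
    fun_prop
  · exact aux_integrable a₀ ha _ (by linarith)
  · refine Measurable.aestronglyMeasurable ?_
    fun_prop
  · filter_upwards [ae_restrict_mem measurableSet_Ioi] with ρ hρ a h
    have hρ : 0 < ρ := hρ
    have h : a₀.re / 2 < a.re := h
    rw [norm_mul, aux_norm a _ hρ, norm_neg, norm_pow, Complex.norm_real,
      Real.norm_of_nonneg hρ.le, ← mul_assoc]
    have e : ρ ^ 2 * ρ ^ (2 * s - 1) = ρ ^ (2 * s + 1) := by
      rw [← Real.rpow_two, ← Real.rpow_add hρ]; ring_nf
    rw [e]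
    gcongr
  · exact integrableOn_rpow_mul_exp_neg_mul_sq (by linarith) (by linarith)
  · refine Filter.Eventually.of_forall fun ρ a _ => ?_
    have h1 : HasDerivAt (fun a : ℂ => -a * (ρ : ℂ) ^ 2) (-1 * (ρ : ℂ) ^ 2) a :=
      ((hasDerivAt_id a).neg).mul_const _
    refine (h1.cexp.mul_const ((ρ ^ (2 * s - 1) : ℝ) : ℂ)).congr_deriv ?_
    ring

lemma aux_gauss (a : ℂ) (ha : 0 < a.re) (s : ℝ) (hs : 0 < s) :
    ∫ ρ in Ioi (0:ℝ), Complex.exp (-a * (ρ : ℂ) ^ 2) * ((ρ ^ (2 * s - 1) : ℝ) : ℂ)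
      = Complex.Gamma s / (2 * a ^ (s : ℂ)) := by
  have hopen : IsOpen {a : ℂ | 0 < a.re} := isOpen_lt continuous_const Complex.continuous_re
  have hconn : IsPreconnected {a : ℂ | 0 < a.re} :=
    (convex_halfSpace_re_gt 0).isPreconnected
  have hf : AnalyticOnNhd ℂ (fun a : ℂ => ∫ ρ in Ioi (0:ℝ),
      Complex.exp (-a * (ρ : ℂ) ^ 2) * ((ρ ^ (2 * s - 1) : ℝ) : ℂ)) {a : ℂ | 0 < a.re} :=
    DifferentiableOn.analyticOnNhd
      (fun a ha => (aux_gauss_diff s hs a ha).differentiableWithinAt) hopen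
  have hg : AnalyticOnNhd ℂ (fun a : ℂ => Complex.Gamma s / (2 * a ^ (s : ℂ)))
      {a : ℂ | 0 < a.re} := by
    refine DifferentiableOn.analyticOnNhd (fun a ha => ?_) hopen
    have ha : 0 < a.re := ha
    have h3 : a ^ (s : ℂ) ≠ 0 := by
      rw [Complex.cpow_ne_zero_iff]
      left; rintro rfl; simp at ha
    refine DifferentiableAt.differentiableWithinAt ?_
    refine DifferentiableAt.div (differentiableAt_const _) ?_ (by simpa using h3)
    exact ((differentiableAt_id.cpow_const (Or.inl ha))).const_mul _
  refine hf.eqOn_of_preconnected_of_frequently_eq hg hconn (z₀ := 1) (by simp) ?_ ha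
  have ht : Filter.Tendsto (fun x : ℝ => (x : ℂ)) (nhdsWithin 1 {1}ᶜ) (nhdsWithin 1 {1}ᶜ) := by
    refine tendsto_nhdsWithin_iff.2 ⟨?_, ?_⟩
    · exact (Complex.continuous_ofReal.tendsto' 1 1 (by simp)).mono_left nhdsWithin_le_nhds
    · filter_upwards [self_mem_nhdsWithin] with x hx
      simpa using hx
  refine ht.frequently (Filter.Eventually.frequently ?_)
  filter_upwards [nhdsWithin_le_nhds (lt_mem_nhds (zero_lt_one' ℝ))] with x hx
  exact aux_gauss_real x hx s hs

lemma aux_norm_integral (α : ℂ) (hα : 0 < α.re) (s : ℝ) (hs : 0 < s) :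
    ∫ ρ in Ioi (0:ℝ), ‖Complex.exp (-α * (ρ : ℂ) ^ 2) * ((ρ ^ (2 * s - 1) : ℝ) : ℂ)‖
      = Real.Gamma s / (2 * α.re ^ s) := by
  have h := aux_gauss (α.re : ℂ) (by simpa using hα) s hs
  have h2 : ∀ ρ : ℝ, Complex.exp (-(α.re : ℂ) * (ρ : ℂ) ^ 2) * ((ρ ^ (2 * s - 1) : ℝ) : ℂ)
      = ((ρ ^ (2 * s - 1) * Real.exp (-α.re * ρ ^ 2) : ℝ) : ℂ) := by
    intro ρ; push_cast; ring
  simp only [h2] at h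
  rw [integral_complex_ofReal, Complex.Gamma_ofReal, ← Complex.ofReal_cpow hα.le] at h
  rw [setIntegral_congr_fun measurableSet_Ioi (fun ρ hρ => aux_norm α (2 * s - 1) hρ)]
  exact_mod_cast h

/-- For `ν ≥ -1/2` and `α, z ∈ ℂ` with `Re α > 0`:
`∫₀^∞ e^{-αρ²} ρ^{1+ν} I_ν(zρ) dρ = z^ν / (2α)^{ν+1} · e^{z²/(4α)}`. -/
theorem integral_gaussian_besselI (ν : ℝ) (hν : -(1 / 2 : ℝ) ≤ ν) (α z : ℂ)
    (hα : 0 < α.re) :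
    ∫ ρ in Set.Ioi (0:ℝ),
        Complex.exp (-α * (ρ : ℂ) ^ 2) * ((ρ : ℂ) ^ ((1 + ν : ℝ) : ℂ)) * besselI ν (z * ρ) =
      z ^ (ν : ℂ) / (2 * α) ^ ((ν : ℂ) + 1) * Complex.exp (z ^ 2 / (4 * α)) := by
  have hα0 : α ≠ 0 := by rintro rfl; simp at hα
  have hs : ∀ n : ℕ, 0 < ν + 1 + n := fun n => by
    have : (0:ℝ) ≤ n := n.cast_nonneg
    linarith
  have hG : ∀ n : ℕ, 0 < Real.Gamma (ν + 1 + n) := fun n => Real.Gamma_pos_of_pos (hs n)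
  have hGc : ∀ n : ℕ, Complex.Gamma ((ν : ℂ) + 1 + n) = (Real.Gamma (ν + 1 + n) : ℂ) := fun n => by
    rw [← Complex.Gamma_ofReal]; push_cast; rfl
  set K : ℂ := z ^ (ν : ℂ) * ((1 / 2 : ℝ) : ℂ) ^ (ν : ℂ) with hK
  set C : ℕ → ℂ := fun n => K * ((z / 2) ^ (2 * n) /
    ((n.factorial : ℂ) * (Real.Gamma (ν + 1 + n) : ℂ))) with hC
  set F : ℕ → ℝ → ℂ := fun n ρ => C n *
    (Complex.exp (-α * (ρ : ℂ) ^ 2) * ((ρ ^ (2 * (ν + 1 + n) - 1) : ℝ) : ℂ)) with hF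
  have hFint : ∀ n, Integrable (F n) (volume.restrict (Ioi 0)) := fun n =>
    (aux_integrable α hα (2 * (ν + 1 + n) - 1) (by linarith [hs n])).const_mul (C n)
  have hFsum : Summable fun n => ∫ ρ in Ioi (0:ℝ), ‖F n ρ‖ := by
    have : ∀ n, ∫ ρ in Ioi (0:ℝ), ‖F n ρ‖ = (‖K‖ / (2 * α.re ^ (ν + 1))) *
        ((‖z / 2‖ ^ 2 / α.re) ^ n / n.factorial) := by
      intro n
      simp only [hF, norm_mul (C n)]
      rw [integral_const_mul, aux_norm_integral α hα _ (hs n)]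
      simp only [hC, norm_mul, norm_div, norm_pow, Complex.norm_natCast, Complex.norm_real]
      rw [Real.norm_of_nonneg (hG n).le, Real.rpow_add hα, Real.rpow_natCast]
      have := (hG n).ne'
      have h4 := (Real.rpow_pos_of_pos hα (ν + 1)).ne'
      rw [pow_mul, ← norm_div, div_pow _ α.re]
      field_simp
    simp only [this]
    exact (Real.summable_pow_div_factorial _).mul_left _
  have hsum := hasSum_integral_of_summable_integral_norm hFint hFsum
  have hlhs : ∫ ρ in Ioi (0:ℝ),
        Complex.exp (-α * (ρ : ℂ) ^ 2) * ((ρ : ℂ) ^ ((1 + ν : ℝ) : ℂ)) * besselI ν (z * ρ)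
      = ∫ ρ in Ioi (0:ℝ), ∑' n, F n ρ := by
    refine setIntegral_congr_fun measurableSet_Ioi fun ρ hρ => ?_
    have hρ : 0 < ρ := hρ
    simp only [besselI]
    rw [← mul_assoc, ← tsum_mul_left]
    refine tsum_congr fun n => ?_
    have e1 : (z * (ρ : ℂ) / 2) ^ (ν : ℂ) = K * ((ρ ^ ν : ℝ) : ℂ) := by
      rw [hK, Complex.ofReal_cpow hρ.le,
        show z * (ρ : ℂ) / 2 = z * ((1 / 2 : ℝ) : ℂ) * (ρ : ℂ) by push_cast; ring,
        aux_cpow_mul_pos _ _ hρ, aux_cpow_mul_pos _ _ (by norm_num)]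
    have e2 : ρ ^ (2 * (ν + 1 + n) - 1) = ρ ^ (1 + ν) * ρ ^ ν * ρ ^ (2 * n) := by
      rw [← Real.rpow_natCast ρ (2 * n), ← Real.rpow_add hρ, ← Real.rpow_add hρ]
      congr 1; push_cast; ring
    simp only [hF, hC]
    rw [e1, e2, hGc, ← Complex.ofReal_cpow hρ.le,
      show z * (ρ : ℂ) / 2 = z / 2 * ρ by ring, mul_pow]
    push_cast
    ring
  rw [hlhs, ← hsum.tsum_eq]
  have hterm : ∀ n, ∫ ρ in Ioi (0:ℝ), F n ρ = (K / (2 * α ^ ((ν : ℂ) + 1))) *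
      ((z ^ 2 / (4 * α)) ^ n / n.factorial) := by
    intro n
    have h3 : α ^ ((ν : ℂ) + 1) ≠ 0 := by
      rw [Complex.cpow_ne_zero_iff]; exact Or.inl hα0
    have h4 : (Real.Gamma (ν + 1 + n) : ℂ) ≠ 0 := by exact_mod_cast (hG n).ne'
    simp only [hF]
    rw [integral_const_mul, aux_gauss α hα _ (hs n), Complex.Gamma_ofReal]
    rw [show ((ν + 1 + n : ℝ) : ℂ) = ((ν : ℂ) + 1) + (n : ℂ) by push_cast; rfl,
      Complex.cpow_add _ _ hα0, Complex.cpow_natCast]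
    simp only [hC]
    rw [pow_mul, show z ^ 2 / (4 * α) = (z / 2) ^ 2 / α by field_simp; norm_num, div_pow _ α]
    field_simp
  simp only [hterm]
  rw [tsum_mul_left, Complex.exp_eq_exp_ℂ, NormedSpace.exp_eq_tsum_div]
  congr 1
  rw [hK, show (2 : ℂ) * α = α * ((2 : ℝ) : ℂ) by push_cast; ring, aux_cpow_mul_pos _ _ two_pos,
    one_div, Complex.ofReal_inv, Complex.inv_cpow_ofReal_nonneg (by norm_num),
    Complex.cpow_add (x := ((2:ℝ):ℂ)) _ _ (by norm_num), Complex.cpow_one]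
  push_cast
  field_simp
end
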